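/- Let H be a complex Hilbert space with grading operator ε, let F be a bounded operator with F² = 1 and Fε = −εF, let Ã be a unital ℂ-algebra, and let ρ : Ã → B(H) be a unital algebra homomorphism into even operators such that Fρ(a) − ρ(a)F is (n+1)-Schatten for every a ∈ Ã (n ≥ 1 an integer). Then for every 1 ≤ j ≤ n+1 and all a₀, a₁, …, a_j ∈ Ã, the operator ρ(a₀)dρ(a₁)⋯dρ(a_j) is (n+1)/j-Schatten; consequently Ω^j ⊆ S_{(n+1)/j}(H). -/

import Mathlib

open scoped ENNReal

noncomputable section

variable {H : Type*} [NormedAddCommGroup H] [InnerProductSpace ℂ H] [CompleteSpace H]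
variable {A : Type*} [Ring A] [Algebra ℂ A]

/-- The `n`-th singular value of a (compact) operator `T`, described via approximation
numbers: the distance from `T` to the operators of rank at most `n`. -/
def sval (T : H →L[ℂ] H) (n : ℕ) : ℝ :=
  sInf {c : ℝ | ∃ R : H →L[ℂ] H,
    Module.rank ℂ (LinearMap.range (R : H →ₗ[ℂ] H)) ≤ (n : Cardinal) ∧ c = ‖T - R‖}

/-- The `p`-Schatten norm `‖T‖_p = (Σ_n s_n(T)^p)^(1/p)`, valued in `ℝ≥0∞`. -/
def schattenNorm (p : ℝ) (T : H →L[ℂ] H) : ℝ≥0∞ :=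
  (∑' n : ℕ, ENNReal.ofReal (sval T n ^ p)) ^ (1 / p)

/-- `T` is a `p`-Schatten operator: compact with finite `p`-Schatten norm. -/
def MemSchatten (p : ℝ) (T : H →L[ℂ] H) : Prop :=
  IsCompactOperator (⇑T) ∧ schattenNorm p T < ⊤

/-- `dT = i(FT - TF)` for an even operator `T`. -/
def dOp (F T : H →L[ℂ] H) : H →L[ℂ] H := Complex.I • (F * T - T * F)

/-- The ordered product `f s * f (s+1) * ⋯ * f (s+k-1)` of operators. -/
def opList (f : ℕ → H →L[ℂ] H) (s k : ℕ) : H →L[ℂ] H := ((List.range' s k).map f).prod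

/-- `Ω^j`: the linear span in `B(H)` of the operators `ρ(a₀)dρ(a₁)⋯dρ(a_j)`. -/
def Omega (ρ : A →ₐ[ℂ] (H →L[ℂ] H)) (F : H →L[ℂ] H) (j : ℕ) : Submodule ℂ (H →L[ℂ] H) :=
  Submodule.span ℂ {x | ∃ a : Fin (j + 1) → A,
    x = ρ (a 0) *
      opList (fun k => dOp F (ρ (a ⟨k % (j + 1), Nat.mod_lt _ (Nat.succ_pos j)⟩))) 1 j}


lemma sval_set_bdd (T : H →L[ℂ] H) (n : ℕ) : BddBelow {c : ℝ | ∃ R : H →L[ℂ] H,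
    Module.rank ℂ (LinearMap.range (R : H →ₗ[ℂ] H)) ≤ (n : Cardinal) ∧ c = ‖T - R‖} := by
  refine ⟨0, ?_⟩
  rintro c ⟨R, -, rfl⟩
  exact norm_nonneg _

lemma sval_le (T R : H →L[ℂ] H) (n : ℕ)
    (h : Module.rank ℂ (LinearMap.range (R : H →ₗ[ℂ] H)) ≤ (n : Cardinal)) :
    sval T n ≤ ‖T - R‖ := csInf_le (sval_set_bdd T n) ⟨R, h, rfl⟩

lemma sval_set_ne (T : H →L[ℂ] H) (n : ℕ) : Set.Nonempty {c : ℝ | ∃ R : H →L[ℂ] H,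
    Module.rank ℂ (LinearMap.range (R : H →ₗ[ℂ] H)) ≤ (n : Cardinal) ∧ c = ‖T - R‖} := by
  refine ⟨_, 0, ?_, rfl⟩
  have : LinearMap.range ((0 : H →L[ℂ] H) : H →ₗ[ℂ] H) = ⊥ := by
    simp
  rw [this]
  simp

lemma sval_nonneg (T : H →L[ℂ] H) (n : ℕ) : 0 ≤ sval T n := by
  apply Real.sInf_nonneg
  rintro c ⟨R, -, rfl⟩
  exact norm_nonneg _

lemma exists_approx (T : H →L[ℂ] H) (n : ℕ) {δ : ℝ} (hδ : 0 < δ) : ∃ R : H →L[ℂ] H,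
    Module.rank ℂ (LinearMap.range (R : H →ₗ[ℂ] H)) ≤ (n : Cardinal) ∧
      ‖T - R‖ < sval T n + δ := by
  obtain ⟨c, ⟨R, h, rfl⟩, hc⟩ := exists_lt_of_csInf_lt (sval_set_ne T n)
    (show sInf _ < sval T n + δ from lt_add_of_pos_right _ hδ)
  exact ⟨R, h, hc⟩

lemma sval_antitone (T : H →L[ℂ] H) : Antitone (sval T) := by
  intro m n hmn
  apply le_csInf (sval_set_ne T m)
  rintro c ⟨R, h, rfl⟩
  exact sval_le T R n (h.trans (by exact_mod_cast hmn))

lemma sval_add (S T : H →L[ℂ] H) (m k : ℕ) : sval (S + T) (m + k) ≤ sval S m + sval T k := by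
  apply le_of_forall_pos_le_add
  intro δ hδ
  obtain ⟨R, hR, hR'⟩ := exists_approx S m (half_pos hδ)
  obtain ⟨Q, hQ, hQ'⟩ := exists_approx T k (half_pos hδ)
  have h1 : sval (S + T) (m + k) ≤ ‖(S + T) - (R + Q)‖ := by
    apply sval_le
    push_cast
    exact (LinearMap.rank_add_le (R : H →ₗ[ℂ] H) (Q : H →ₗ[ℂ] H)).trans (add_le_add hR hQ)
  have h2 : (S + T) - (R + Q) = (S - R) + (T - Q) := by abel
  rw [h2] at h1
  linarith [norm_add_le (S - R) (T - Q)]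

lemma sval_mul (S T : H →L[ℂ] H) (m k : ℕ) : sval (S * T) (m + k) ≤ sval S m * sval T k := by
  have key : ∀ δ : ℝ, 0 < δ → sval (S * T) (m + k) ≤ (sval S m + δ) * (sval T k + δ) := by
    intro δ hδ
    obtain ⟨R, hR, hR'⟩ := exists_approx S m hδ
    obtain ⟨Q, hQ, hQ'⟩ := exists_approx T k hδ
    have h1 : sval (S * T) (m + k) ≤ ‖(S * T) - (R * (T - Q) + S * Q)‖ := by
      apply sval_le
      push_cast
      refine (LinearMap.rank_add_le ((R * (T - Q) : H →L[ℂ] H) : H →ₗ[ℂ] H)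
        ((S * Q : H →L[ℂ] H) : H →ₗ[ℂ] H)).trans (add_le_add ?_ ?_)
      · exact (LinearMap.rank_comp_le_left ((T - Q : H →L[ℂ] H) : H →ₗ[ℂ] H)
          (R : H →ₗ[ℂ] H)).trans hR
      · exact (LinearMap.rank_comp_le_right (Q : H →ₗ[ℂ] H) (S : H →ₗ[ℂ] H)).trans hQ
    have h2 : (S * T) - (R * (T - Q) + S * Q) = (S - R) * (T - Q) := by noncomm_ring
    rw [h2] at h1
    refine h1.trans ((norm_mul_le _ _).trans ?_)
    have := sval_nonneg S m
    gcongr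
  have hc : Filter.Tendsto (fun δ : ℝ => (sval S m + δ) * (sval T k + δ))
      (nhdsWithin 0 (Set.Ioi 0)) (nhds ((sval S m + 0) * (sval T k + 0))) := by
    apply Filter.Tendsto.mono_left _ nhdsWithin_le_nhds
    apply Continuous.tendsto
    fun_prop
  rw [add_zero, add_zero] at hc
  exact ge_of_tendsto hc (by filter_upwards [self_mem_nhdsWithin] with δ hδ using key δ hδ)

lemma memSchatten_iff {p : ℝ} (hp : 0 < p) (T : H →L[ℂ] H) :
    MemSchatten p T ↔ IsCompactOperator (⇑T) ∧ Summable (fun n => sval T n ^ p) := by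
  unfold MemSchatten schattenNorm
  rw [ENNReal.rpow_lt_top_iff_of_pos (by positivity), lt_top_iff_ne_top]
  refine and_congr_right fun _ => ⟨fun h => ?_, fun h => h.tsum_ofReal_ne_top⟩
  have := ENNReal.summable_toReal h
  refine this.congr fun n => ?_
  rw [ENNReal.toReal_ofReal (Real.rpow_nonneg (sval_nonneg T n) p)]

lemma summable_of_double {f : ℕ → ℝ} (h0 : ∀ n, 0 ≤ f n) (ha : Antitone f)
    (h : Summable fun n => f (2 * n)) : Summable f := by
  have h' : Summable fun n => f (2 * n + 1) :=
    Summable.of_nonneg_of_le (fun n => h0 _) (fun n => ha (Nat.le_succ _)) h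
  exact (h.hasSum.even_add_odd h'.hasSum).summable

lemma summable_sval_of {p : ℝ} (hp : 0 < p) (T : H →L[ℂ] H) {g : ℕ → ℝ} (hg : Summable g)
    (h : ∀ n, sval T (n + n) ^ p ≤ g n) : Summable (fun n => sval T n ^ p) := by
  apply summable_of_double (fun n => Real.rpow_nonneg (sval_nonneg T n) p)
  · intro m n hmn
    exact Real.rpow_le_rpow (sval_nonneg T n) (sval_antitone T hmn) hp.le
  · refine Summable.of_nonneg_of_le (fun n => Real.rpow_nonneg (sval_nonneg T _) p) ?_ hg
    intro n
    rw [two_mul]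
    exact h n

lemma MemSchatten.add' {p : ℝ} (hp : 0 < p) {S T : H →L[ℂ] H} (hS : MemSchatten p S)
    (hT : MemSchatten p T) : MemSchatten p (S + T) := by
  rw [memSchatten_iff hp] at *
  refine ⟨hS.1.add hT.1, summable_sval_of hp _ ((hS.2.add hT.2).mul_left (2 ^ p)) fun n => ?_⟩
  have hs := sval_nonneg S n
  have ht := sval_nonneg T n
  have hs' := Real.rpow_nonneg hs p
  have ht' := Real.rpow_nonneg ht p
  rcases le_total (sval S n) (sval T n) with h | h
  · calc sval (S + T) (n + n) ^ p ≤ (2 * sval T n) ^ p :=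
          Real.rpow_le_rpow (sval_nonneg _ _) (by linarith [sval_add S T n n]) hp.le
      _ = 2 ^ p * sval T n ^ p := Real.mul_rpow (by norm_num) ht
      _ ≤ _ := by gcongr; linarith
  · calc sval (S + T) (n + n) ^ p ≤ (2 * sval S n) ^ p :=
          Real.rpow_le_rpow (sval_nonneg _ _) (by linarith [sval_add S T n n]) hp.le
      _ = 2 ^ p * sval S n ^ p := Real.mul_rpow (by norm_num) hs
      _ ≤ _ := by gcongr; linarith

lemma MemSchatten.left_mul {p : ℝ} (hp : 0 < p) {T : H →L[ℂ] H} (B : H →L[ℂ] H)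
    (hT : MemSchatten p T) : MemSchatten p (B * T) := by
  rw [memSchatten_iff hp] at *
  refine ⟨hT.1.clm_comp B, Summable.of_nonneg_of_le
    (fun n => Real.rpow_nonneg (sval_nonneg _ _) p) (fun n => ?_) (hT.2.mul_left (sval B 0 ^ p))⟩
  rw [← Real.mul_rpow (sval_nonneg _ _) (sval_nonneg _ _)]
  refine Real.rpow_le_rpow (sval_nonneg _ _) ?_ hp.le
  simpa using sval_mul B T 0 n

lemma MemSchatten.smul' {p : ℝ} (hp : 0 < p) {T : H →L[ℂ] H} (c : ℂ)
    (hT : MemSchatten p T) : MemSchatten p (c • T) := by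
  have := hT.left_mul hp (c • (1 : H →L[ℂ] H))
  rwa [smul_mul_assoc, one_mul] at this

lemma MemSchatten.mul' {p q r : ℝ} (hp : 0 < p) (hq : 0 < q) (hr : 0 < r)
    (hpqr : r / p + r / q = 1) {S T : H →L[ℂ] H} (hS : MemSchatten p S)
    (hT : MemSchatten q T) : MemSchatten r (S * T) := by
  rw [memSchatten_iff hp] at hS
  rw [memSchatten_iff hq] at hT
  rw [memSchatten_iff hr]
  refine ⟨hS.1.comp_clm T, summable_sval_of hr _ (hS.2.add hT.2) fun n => ?_⟩
  have hs := sval_nonneg S n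
  have ht := sval_nonneg T n
  have h1 : 0 < r / p := by positivity
  have h2 : 0 < r / q := by positivity
  have hy := Real.geom_mean_le_arith_mean2_weighted h1.le h2.le
    (Real.rpow_nonneg hs p) (Real.rpow_nonneg ht q) hpqr
  rw [← Real.rpow_mul hs, ← Real.rpow_mul ht, mul_div_cancel₀ _ hp.ne',
    mul_div_cancel₀ _ hq.ne'] at hy
  calc sval (S * T) (n + n) ^ r ≤ (sval S n * sval T n) ^ r :=
        Real.rpow_le_rpow (sval_nonneg _ _) (sval_mul S T n n) hr.le
    _ = sval S n ^ r * sval T n ^ r := Real.mul_rpow hs ht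
    _ ≤ _ := hy
    _ ≤ 1 * sval S n ^ p + 1 * sval T n ^ q := by
        have := Real.rpow_nonneg hs p
        have := Real.rpow_nonneg ht q
        gcongr <;> linarith
    _ = _ := by ring

lemma memSchatten_opList {N : ℝ} (hN : 0 < N) (f : ℕ → H →L[ℂ] H) (s : ℕ)
    (hf : ∀ k, MemSchatten N (f k)) (j : ℕ) (hj : 1 ≤ j) :
    MemSchatten (N / (j : ℝ)) (opList f s j) := by
  induction j, hj using Nat.le_induction with
  | base => simpa [opList] using hf s
  | succ j hj ih =>
    have hj' : (0 : ℝ) < j := by exact_mod_cast hj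
    have : opList f s (j + 1) = opList f s j * f (s + j) := by
      simp [opList, List.range'_1_concat]
    rw [this]
    push_cast
    refine MemSchatten.mul' (p := N / j) (q := N) (by positivity) hN (by positivity) ?_ ih (hf _)
    field_simp

/-- Let `(H, ε)` be ℤ₂-graded, `F` bounded with `F² = 1`, `Fε = -εF`, `A` a unital
ℂ-algebra, and `ρ : A → B(H)` a unital homomorphism into even operators with
`Fρ(a) - ρ(a)F` being `(n+1)`-Schatten for all `a` (`n ≥ 1`).  Then for `1 ≤ j ≤ n+1` every
operator `ρ(a₀)dρ(a₁)⋯dρ(a_j)` is `(n+1)/j`-Schatten; consequently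
`Ω^j ⊆ S_{(n+1)/j}(H)`. -/
theorem omega_subset_schatten (n : ℕ) (hn : 1 ≤ n) (ε F : H →L[ℂ] H)
    (hε : IsSelfAdjoint ε) (hε2 : ε * ε = 1) (hF2 : F * F = 1) (hFε : F * ε = -(ε * F))
    (ρ : A →ₐ[ℂ] (H →L[ℂ] H)) (heven : ∀ a : A, ε * ρ a = ρ a * ε)
    (hS : ∀ a : A, MemSchatten ((n : ℝ) + 1) (F * ρ a - ρ a * F)) :
    ∀ j : ℕ, 1 ≤ j → j ≤ n + 1 →
      (∀ a : Fin (j + 1) → A,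
        MemSchatten (((n : ℝ) + 1) / (j : ℝ))
          (ρ (a 0) *
            opList (fun k => dOp F (ρ (a ⟨k % (j + 1), Nat.mod_lt _ (Nat.succ_pos j)⟩))) 1 j)) ∧
      (∀ x ∈ Omega ρ F j, MemSchatten (((n : ℝ) + 1) / (j : ℝ)) x) := by
  intro j hj hjn
  have hN : (0 : ℝ) < (n : ℝ) + 1 := by positivity
  have hj' : (0 : ℝ) < j := by exact_mod_cast hj
  have hp : (0 : ℝ) < ((n : ℝ) + 1) / (j : ℝ) := by positivity
  have key : ∀ a : Fin (j + 1) → A,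
        MemSchatten (((n : ℝ) + 1) / (j : ℝ))
          (ρ (a 0) *
            opList (fun k => dOp F (ρ (a ⟨k % (j + 1), Nat.mod_lt _ (Nat.succ_pos j)⟩))) 1 j) :=
    fun a => MemSchatten.left_mul hp _
      (memSchatten_opList hN _ 1 (fun k => MemSchatten.smul' hN _ (hS _)) j hj)
  refine ⟨key, fun x hx => ?_⟩
  unfold Omega at hx
  induction hx using Submodule.span_induction with
  | mem x h =>
    obtain ⟨a, rfl⟩ := h
    exact key a
  | zero => simpa using key 0
  | add x y _ _ hx hy => exact hx.add' hp hy
  | smul c x _ hx => exact hx.smul' hp c
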